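/- Let n ≥ 2 and 1 ≤ r ≤ n-1, and let A ⊆ [n]^(r). Then |N(A)| ≥ max{ |N(A₀)| + (r/(n-r))·|A₀|, |N(A₁)| + ((n-r)/r)·|A₁|, |N(A₀)| + |N(A₁)| }, where on the right-hand side A₀, A₁ are the lower and upper n-sections of A and N is taken with respect to the ground set [n-1]. -/

import Mathlib

/-- `[m]^(k)`: the `k`-element subsets of `{1,…,m}`. -/
def rSets (m k : ℕ) : Finset (Finset ℕ) := (Finset.Icc 1 m).powersetCard k

/-- The neighbourhood `N(A) = A ∪ b(A)` of `A ⊆ [m]^(k)` in the graph `Γ_m^(k)`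
where `x ~ y` iff `|x Δ y| = 2`. -/
def nbhd (m k : ℕ) (A : Finset (Finset ℕ)) : Finset (Finset ℕ) :=
  A ∪ (rSets m k).filter (fun x => x ∉ A ∧ ∃ y ∈ A, (symmDiff x y).card = 2)

/-- The lower `n`-section `B₀ = {x ∈ B : n ∉ x}` of a family `B`. -/
def lowerSection (n : ℕ) (B : Finset (Finset ℕ)) : Finset (Finset ℕ) :=
  B.filter (fun x => n ∉ x)

/-- The upper `n`-section `B₁ = {x ∈ [n-1]^(r-1) : x ∪ {n} ∈ B}` of a family
`B ⊆ [n]^(r)`. -/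
def upperSection (n r : ℕ) (B : Finset (Finset ℕ)) : Finset (Finset ℕ) :=
  (rSets (n - 1) (r - 1)).filter (fun x => insert n x ∈ B)

theorem aux_mem_nbhd {m k : ℕ} {A : Finset (Finset ℕ)} {x : Finset ℕ} :
    x ∈ nbhd m k A ↔ x ∈ A ∨ (x ∈ rSets m k ∧ ∃ y ∈ A, (symmDiff x y).card = 2) := by
  simp only [nbhd, Finset.mem_union, Finset.mem_filter]
  tauto

theorem aux_mem_rSets {m k : ℕ} {x : Finset ℕ} :
    x ∈ rSets m k ↔ (∀ i ∈ x, 1 ≤ i ∧ i ≤ m) ∧ x.card = k := by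
  simp [rSets, Finset.mem_powersetCard, Finset.subset_iff]

theorem aux_symm (z : Finset ℕ) (a b : ℕ) (ha : a ∉ z) (hb : b ∉ z) (hab : a ≠ b) :
    (symmDiff (insert a z) (insert b z)).card = 2 := by
  have : symmDiff (insert a z) (insert b z) = {a, b} := by
    ext i
    simp only [Finset.mem_symmDiff, Finset.mem_insert, Finset.mem_singleton]
    grind
  rw [this, Finset.card_pair hab]

theorem aux_symm_insert (x y : Finset ℕ) (a : ℕ) (ha : a ∉ x) (hb : a ∉ y) :
    symmDiff (insert a x) (insert a y) = symmDiff x y := by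
  ext i
  simp only [Finset.mem_symmDiff, Finset.mem_insert]
  grind

theorem aux_notMem {n k : ℕ} (hn : 2 ≤ n) {x : Finset ℕ} (h : x ∈ rSets (n - 1) k) : n ∉ x := by
  intro hx
  have := (aux_mem_rSets.1 h).1 n hx
  omega

theorem aux_mono {n k : ℕ} {x : Finset ℕ} (h : x ∈ rSets (n - 1) k) : x ∈ rSets n k := by
  rw [aux_mem_rSets] at *
  exact ⟨fun i hi => ⟨(h.1 i hi).1, by have := (h.1 i hi).2; omega⟩, h.2⟩

theorem aux_insert {n r : ℕ} (hn : 2 ≤ n) (hr : 1 ≤ r) {x : Finset ℕ}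
    (h : x ∈ rSets (n - 1) (r - 1)) : insert n x ∈ rSets n r := by
  have h1 := aux_notMem hn h
  have h2 := aux_mono h
  rw [aux_mem_rSets] at *
  refine ⟨fun i hi => ?_, ?_⟩
  · rcases Finset.mem_insert.1 hi with rfl | hi
    · omega
    · exact h2.1 i hi
  · rw [Finset.card_insert_of_notMem h1, h2.2]; omega

theorem aux_lower {n r : ℕ} {A : Finset (Finset ℕ)} (hA : A ⊆ rSets n r) {x : Finset ℕ}
    (h : x ∈ lowerSection n A) : x ∈ A ∧ x ∈ rSets (n - 1) r := by
  simp only [lowerSection, Finset.mem_filter] at h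
  refine ⟨h.1, ?_⟩
  have := hA h.1
  rw [aux_mem_rSets] at *
  refine ⟨fun i hi => ?_, this.2⟩
  have h3 := this.1 i hi
  have : i ≠ n := by rintro rfl; exact h.2 hi
  omega

theorem aux_nbhd_sub {n r : ℕ} {A : Finset (Finset ℕ)} (hA : A ⊆ rSets n r) :
    nbhd n r A ⊆ rSets n r := by
  intro x hx
  rcases aux_mem_nbhd.1 hx with h | h
  · exact hA h
  · exact h.1

theorem aux_card {n r : ℕ} (hn : 2 ≤ n) (hr : 1 ≤ r) {B : Finset (Finset ℕ)}
    (hB : B ⊆ rSets n r) :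
    B.card = (lowerSection n B).card + (upperSection n r B).card := by
  rw [← Finset.card_filter_add_card_filter_not (s := B) (fun x => n ∉ x)]
  congr 1
  symm
  apply Finset.card_bij (fun x _ => insert n x)
  · intro x hx
    simp only [upperSection, Finset.mem_filter] at hx
    simp [hx.2]
  · intro x hx y hy hxy
    simp only [upperSection, Finset.mem_filter] at hx hy
    have h1 := aux_notMem hn hx.1
    have h2 := aux_notMem hn hy.1
    rw [← Finset.erase_insert h1, ← Finset.erase_insert h2, hxy]
  · intro x hx
    simp only [Finset.mem_filter, not_not] at hx
    refine ⟨x.erase n, ?_, Finset.insert_erase hx.2⟩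
    simp only [upperSection, Finset.mem_filter, Finset.insert_erase hx.2, hx.1, and_true]
    have := hB hx.1
    rw [aux_mem_rSets] at *
    refine ⟨fun i hi => ?_, by rw [Finset.card_erase_of_mem hx.2, this.2]⟩
    have h3 := this.1 i (Finset.mem_of_mem_erase hi)
    have := Finset.ne_of_mem_erase hi
    omega

theorem aux_L {n r : ℕ} (hn : 2 ≤ n) {A : Finset (Finset ℕ)} (hA : A ⊆ rSets n r) :
    nbhd (n - 1) r (lowerSection n A) ⊆ lowerSection n (nbhd n r A) := by
  intro x hx
  rw [lowerSection, Finset.mem_filter, aux_mem_nbhd]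
  rcases aux_mem_nbhd.1 hx with h | ⟨h, y, hy, hs⟩
  · have := aux_lower hA h
    exact ⟨Or.inl this.1, aux_notMem hn this.2⟩
  · exact ⟨Or.inr ⟨aux_mono h, y, (aux_lower hA hy).1, hs⟩, aux_notMem hn h⟩

theorem aux_U {n r : ℕ} (hn : 2 ≤ n) (hr : 1 ≤ r) {A : Finset (Finset ℕ)} :
    nbhd (n - 1) (r - 1) (upperSection n r A) ⊆ upperSection n r (nbhd n r A) := by
  intro x hx
  rw [upperSection, Finset.mem_filter, aux_mem_nbhd]
  rcases aux_mem_nbhd.1 hx with h | ⟨h, y, hy, hs⟩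
  · simp only [upperSection, Finset.mem_filter] at h
    exact ⟨h.1, Or.inl h.2⟩
  · simp only [upperSection, Finset.mem_filter] at hy
    refine ⟨h, Or.inr ⟨aux_insert hn hr h, _, hy.2, ?_⟩⟩
    rw [aux_symm_insert _ _ _ (aux_notMem hn h) (aux_notMem hn hy.1), hs]

/-- sets one larger than `y` and containing `y` -/
theorem aux_cover {x y : Finset ℕ} {k : ℕ} (hk : 1 ≤ k) (hx : x.card = k) (hy : y.card = k - 1)
    (h : y ⊆ x) : ∃ a ∈ x, a ∉ y ∧ x = insert a y ∧ y = x.erase a := by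
  obtain ⟨a, ha⟩ := Finset.card_eq_one.1 (show (x \ y).card = 1 by
    rw [Finset.card_sdiff_of_subset h]; omega)
  have h1 : a ∈ x \ y := by simp [ha]
  rw [Finset.mem_sdiff] at h1
  have h2 : x = insert a y := by
    ext i
    have h3 : i ∈ x \ y ↔ i = a := by simp [ha]
    rw [Finset.mem_sdiff] at h3
    have h4 := @h i
    rw [Finset.mem_insert]
    tauto
  refine ⟨a, h1.1, h1.2, h2, ?_⟩
  conv_rhs => rw [h2]
  rw [Finset.erase_insert h1.2]

theorem aux_down_deg {m k : ℕ} (hk : 1 ≤ k) {B : Finset (Finset ℕ)} (hB : B ⊆ rSets m (k - 1))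
    {x : Finset ℕ} (hx : x ∈ rSets m k) : (B.filter (fun y => y ⊆ x)).card ≤ k := by
  have hx2 := (aux_mem_rSets.1 hx).2
  calc _ ≤ (x.image (fun a => x.erase a)).card := by
        apply Finset.card_le_card
        intro y hy
        rw [Finset.mem_filter] at hy
        obtain ⟨a, ha, -, -, h⟩ := aux_cover hk hx2 (aux_mem_rSets.1 (hB hy.1)).2 hy.2
        exact Finset.mem_image.2 ⟨a, ha, h.symm⟩
    _ ≤ x.card := Finset.card_image_le
    _ = k := hx2

theorem aux_compl {m k : ℕ} {y : Finset ℕ} (hy : y ∈ rSets m k) :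
    (Finset.Icc 1 m \ y).card = m - k := by
  have h := Finset.mem_powersetCard.1 hy
  rw [Finset.card_sdiff_of_subset h.1, h.2]; simp

theorem aux_up_deg {m k : ℕ} (hk : 1 ≤ k) {B : Finset (Finset ℕ)} (hB : B ⊆ rSets m k)
    {y : Finset ℕ} (hy : y ∈ rSets m (k - 1)) :
    (B.filter (fun x => y ⊆ x)).card ≤ m - (k - 1) := by
  calc _ ≤ ((Finset.Icc 1 m \ y).image (fun a => insert a y)).card := by
        apply Finset.card_le_card
        intro x hx
        rw [Finset.mem_filter] at hx
        have h1 := aux_mem_rSets.1 (hB hx.1)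
        obtain ⟨a, ha, h2, h, -⟩ := aux_cover hk h1.2 (aux_mem_rSets.1 hy).2 hx.2
        refine Finset.mem_image.2 ⟨a, ?_, h.symm⟩
        rw [Finset.mem_sdiff, Finset.mem_Icc]
        exact ⟨h1.1 a ha, h2⟩
    _ ≤ _ := Finset.card_image_le
    _ = _ := aux_compl hy

theorem aux_shadow {n r : ℕ} (hn : 2 ≤ n) (hr : 1 ≤ r) {A : Finset (Finset ℕ)}
    (hA : A ⊆ rSets n r) :
    (lowerSection n A).card * r ≤ (upperSection n r (nbhd n r A)).card * (n - r) := by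
  apply Finset.card_mul_le_card_mul (fun x y : Finset ℕ => y ⊆ x)
  · intro x hx
    obtain ⟨hxA, hxr⟩ := aux_lower hA hx
    have hnx := aux_notMem hn hxr
    have hx1 := aux_mem_rSets.1 hxr
    calc r = (x.image (fun a => x.erase a)).card := by
          rw [Finset.card_image_of_injOn, hx1.2]
          exact Finset.erase_injOn x
      _ ≤ _ := by
          apply Finset.card_le_card
          intro y hy
          obtain ⟨a, ha, rfl⟩ := Finset.mem_image.1 hy
          rw [Finset.mem_bipartiteAbove, upperSection, Finset.mem_filter]
          have h1 : x.erase a ∈ rSets (n - 1) (r - 1) := by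
            rw [aux_mem_rSets]
            exact ⟨fun i hi => hx1.1 i (Finset.mem_of_mem_erase hi), by
              rw [Finset.card_erase_of_mem ha, hx1.2]⟩
          refine ⟨⟨h1, ?_⟩, Finset.erase_subset _ _⟩
          refine aux_mem_nbhd.2 (Or.inr ⟨aux_insert hn hr h1, x, hxA, ?_⟩)
          conv_lhs => rw [← Finset.insert_erase ha, Finset.erase_insert (Finset.notMem_erase a x)]
          apply aux_symm _ _ _ (aux_notMem hn h1) (Finset.notMem_erase a x)
          rintro rfl
          exact hnx ha
  · intro y hy
    have hy1 : y ∈ rSets (n - 1) (r - 1) := (Finset.mem_filter.1 hy).1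
    have := aux_up_deg hr (B := lowerSection n A) (fun x hx => (aux_lower hA hx).2) hy1
    refine le_trans this ?_
    omega

theorem aux_upshadow {n r : ℕ} (hn : 2 ≤ n) (hr : 1 ≤ r) {A : Finset (Finset ℕ)}
    (hA : A ⊆ rSets n r) :
    (upperSection n r A).card * (n - r) ≤ (lowerSection n (nbhd n r A)).card * r := by
  apply Finset.card_mul_le_card_mul (fun y x : Finset ℕ => y ⊆ x)
  · intro y hy
    obtain ⟨hyr, hyA⟩ := Finset.mem_filter.1 hy
    have hny := aux_notMem hn hyr
    have hy1 := aux_mem_rSets.1 hyr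
    calc n - r = ((Finset.Icc 1 (n - 1) \ y).image (fun a => insert a y)).card := by
          rw [Finset.card_image_of_injOn, aux_compl hyr]
          · omega
          · intro a ha b hb hab
            have ha' : a ∉ y := by simp at ha; exact ha.2
            have h : a ∈ insert b y := by
              have : insert a y = insert b y := hab
              rw [← this]; exact Finset.mem_insert_self _ _
            exact (Finset.mem_insert.1 h).resolve_right ha'
      _ ≤ _ := by
          apply Finset.card_le_card
          intro x hx
          obtain ⟨a, ha, rfl⟩ := Finset.mem_image.1 hx
          rw [Finset.mem_sdiff, Finset.mem_Icc] at ha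
          rw [Finset.mem_bipartiteAbove, lowerSection, Finset.mem_filter]
          have h1 : insert a y ∈ rSets (n - 1) r := by
            rw [aux_mem_rSets]
            refine ⟨fun i hi => ?_, ?_⟩
            · rcases Finset.mem_insert.1 hi with rfl | hi
              · exact ha.1
              · exact hy1.1 i hi
            · rw [Finset.card_insert_of_notMem ha.2, hy1.2]; omega
          refine ⟨⟨?_, aux_notMem hn h1⟩, Finset.subset_insert _ _⟩
          refine aux_mem_nbhd.2 (Or.inr ⟨aux_mono h1, _, hyA, ?_⟩)
          exact aux_symm _ _ _ ha.2 hny (by omega)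
  · intro x hx
    have hx1 := (aux_lower (aux_nbhd_sub hA) hx).2
    exact aux_down_deg hr (B := upperSection n r A) (Finset.filter_subset _ _) hx1

/-- Inequality (2) of the paper: for `A ⊆ [n]^(r)`,
`|N(A)| ≥ max{ |N(A₀)| + (r/(n-r))·|A₀|, |N(A₁)| + ((n-r)/r)·|A₁|, |N(A₀)| + |N(A₁)| }`,
where `A₀, A₁` are the lower and upper `n`-sections of `A`, and on the right-hand side
`N` is taken with respect to the ground set `[n-1]`. -/
theorem stmt_8 (n r : ℕ) (hn : 2 ≤ n) (hr1 : 1 ≤ r) (hrn : r ≤ n - 1)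
    (A : Finset (Finset ℕ)) (hA : A ⊆ rSets n r) :
    ((nbhd n r A).card : ℝ)
      ≥ max (max
          (((nbhd (n - 1) r (lowerSection n A)).card : ℝ)
            + ((r : ℝ) / ((n : ℝ) - r)) * ((lowerSection n A).card : ℝ))
          (((nbhd (n - 1) (r - 1) (upperSection n r A)).card : ℝ)
            + (((n : ℝ) - r) / r) * ((upperSection n r A).card : ℝ)))
          (((nbhd (n - 1) r (lowerSection n A)).card : ℝ)
            + ((nbhd (n - 1) (r - 1) (upperSection n r A)).card : ℝ)) := by
  have hc := aux_card hn hr1 (aux_nbhd_sub hA)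
  have hL := Finset.card_le_card (aux_L hn hA)
  have hU := Finset.card_le_card (aux_U hn hr1 (A := A))
  have hS := aux_shadow hn hr1 hA
  have hT := aux_upshadow hn hr1 hA
  have hcr : ((nbhd n r A).card : ℝ) = (lowerSection n (nbhd n r A)).card
      + (upperSection n r (nbhd n r A)).card := by exact_mod_cast hc
  have hrle : r ≤ n := by omega
  have hpos : (0 : ℝ) < (n : ℝ) - r := by
    have : r < n := by omega
    have : (r : ℝ) < n := by exact_mod_cast this
    linarith
  have hrpos : (0 : ℝ) < r := by exact_mod_cast hr1
  have hL' : ((nbhd (n - 1) r (lowerSection n A)).card : ℝ)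
      ≤ (lowerSection n (nbhd n r A)).card := by exact_mod_cast hL
  have hU' : ((nbhd (n - 1) (r - 1) (upperSection n r A)).card : ℝ)
      ≤ (upperSection n r (nbhd n r A)).card := by exact_mod_cast hU
  have hS' : ((lowerSection n A).card : ℝ) * r
      ≤ (upperSection n r (nbhd n r A)).card * ((n : ℝ) - r) := by
    rw [← Nat.cast_sub hrle]; exact_mod_cast hS
  have hT' : ((upperSection n r A).card : ℝ) * ((n : ℝ) - r)
      ≤ (lowerSection n (nbhd n r A)).card * r := by
    rw [← Nat.cast_sub hrle]; exact_mod_cast hT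
  have hS2 : ((r : ℝ) / ((n : ℝ) - r)) * ((lowerSection n A).card : ℝ)
      ≤ (upperSection n r (nbhd n r A)).card := by
    rw [div_mul_eq_mul_div, div_le_iff₀ hpos]; linarith
  have hT2 : (((n : ℝ) - r) / r) * ((upperSection n r A).card : ℝ)
      ≤ (lowerSection n (nbhd n r A)).card := by
    rw [div_mul_eq_mul_div, div_le_iff₀ hrpos]; linarith
  refine max_le (max_le ?_ ?_) ?_ <;> linarith
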